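/- Let y ∈ ℝ^p, let δ ∈ ℝ^p be a direction of recession that is not a direction of constancy (⟨x − y, δ⟩ ≤ 0 for ν-almost every x but not ⟨x − y, δ⟩ = 0 for ν-almost every x), set H = {x ∈ ℝ^p : ⟨x − y, δ⟩ = 0}, and assume ν(H) > 0. Then for every θ ∈ Θ the function s ↦ μ_{θ+sδ}(H) is continuous and strictly increasing on [0, ∞), and μ_{θ+sδ}(H) → 1 as s → ∞. -/

import Mathlib

open MeasureTheory Real Filter Topology Set
open scoped RealInnerProductSpace ENNReal

/-- The normalizing integral (Laplace transform) `∫ exp⟪x, θ⟫ dν(x)` as an `ℝ≥0∞`-valued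
lower integral; `θ` lies in the natural parameter space iff this is finite. -/
noncomputable def partitionFn {p : ℕ} (ν : Measure (EuclideanSpace ℝ (Fin p)))
    (θ : EuclideanSpace ℝ (Fin p)) : ℝ≥0∞ :=
  ∫⁻ x, ENNReal.ofReal (Real.exp ⟪x, θ⟫) ∂ν

/-- The cumulant function `c(θ) = log ∫ exp⟪x, θ⟫ dν(x)` (real-valued; meaningful on the
natural parameter space `{θ | partitionFn ν θ < ⊤}`). -/
noncomputable def cumulant {p : ℕ} (ν : Measure (EuclideanSpace ℝ (Fin p)))
    (θ : EuclideanSpace ℝ (Fin p)) : ℝ :=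
  Real.log (partitionFn ν θ).toReal

/-- The extended-real-valued cumulant function, equal to `⊤` off the natural parameter space. -/
noncomputable def ecumulant {p : ℕ} (ν : Measure (EuclideanSpace ℝ (Fin p)))
    (θ : EuclideanSpace ℝ (Fin p)) : EReal :=
  if partitionFn ν θ = ⊤ then ⊤ else ((cumulant ν θ : ℝ) : EReal)

/-- The member of the full exponential family generated by `ν` with natural parameter `θ`:
the measure with density `x ↦ exp(⟪x, θ⟫ − c(θ))` with respect to `ν`. -/
noncomputable def expFam {p : ℕ} (ν : Measure (EuclideanSpace ℝ (Fin p)))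
    (θ : EuclideanSpace ℝ (Fin p)) : Measure (EuclideanSpace ℝ (Fin p)) :=
  ν.withDensity fun x => ENNReal.ofReal (Real.exp (⟪x, θ⟫ - cumulant ν θ))

/-- `K` is the convex support of `ν`: the smallest closed convex set of full `ν`-measure. -/
def IsConvexSupport {p : ℕ} (ν : Measure (EuclideanSpace ℝ (Fin p)))
    (K : Set (EuclideanSpace ℝ (Fin p))) : Prop :=
  IsClosed K ∧ Convex ℝ K ∧ ν Kᶜ = 0 ∧
    ∀ C : Set (EuclideanSpace ℝ (Fin p)), IsClosed C → Convex ℝ C → ν Cᶜ = 0 → K ⊆ C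

/-!
Writing `X x = ⟪x - y, δ⟫`, the inner product `⟪x, θ + s • δ⟫` is `⟪x, θ⟫ + s * X x` up to a
constant, so `μ_{θ+sδ}` is the exponential tilt of `μ_θ` by `s * X`. On `H = {X = 0}` the tilting
density is the constant `1 / mgf X μ_θ s`, whence `μ_{θ+sδ}(H) = μ_θ(H) / mgf X μ_θ s`. As `X ≤ 0`
almost everywhere, `exp (s * X)` is dominated by `1` and decreases to the indicator of `H`, so the
moment generating function decreases continuously from `1` to `μ_θ(H)`, and does so strictly
because `X` is not almost everywhere zero.
-/

theorem tilted_add_const {Ω : Type*} {mΩ : MeasurableSpace Ω} (μ : Measure Ω) (f : Ω → ℝ)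
    (c : ℝ) : μ.tilted (fun ω => f ω + c) = μ.tilted f := by
  simp only [Measure.tilted, exp_add, integral_mul_const,
    mul_div_mul_right _ _ (exp_pos c).ne']

section NonposStatistic

open ProbabilityTheory

variable {Ω : Type*} {mΩ : MeasurableSpace Ω} {μ : Measure Ω} {X : Ω → ℝ}

theorem norm_exp_mul_le_one_of_ae_nonpos (hX : ∀ᵐ ω ∂μ, X ω ≤ 0) {s : ℝ} (hs : 0 ≤ s) :
    ∀ᵐ ω ∂μ, ‖rexp (s * X ω)‖ ≤ 1 := by
  filter_upwards [hX] with ω hω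
  rw [norm_of_nonneg (exp_pos _).le, exp_le_one_iff]
  exact mul_nonpos_of_nonneg_of_nonpos hs hω

theorem aestronglyMeasurable_exp_mul (hXm : AEMeasurable X μ) (s : ℝ) :
    AEStronglyMeasurable (fun ω => rexp (s * X ω)) μ :=
  (hXm.const_mul s).exp.aestronglyMeasurable

theorem tendsto_exp_mul_atTop_indicator {x : ℝ} (hx : x ≤ 0) :
    Tendsto (fun s : ℝ => rexp (s * x)) atTop (𝓝 (({0} : Set ℝ).indicator 1 x)) := by
  rcases hx.lt_or_eq with hneg | rfl
  · rw [indicator_of_notMem (by simpa using hneg.ne)]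
    exact tendsto_exp_atBot.comp (tendsto_id.atTop_mul_const_of_neg hneg)
  · simp

theorem measureReal_tilted_mul_eq_div_mgf [SFinite μ] (hXm : AEMeasurable X μ) (s : ℝ) :
    (μ.tilted (s * X ·)).real {ω | X ω = 0} = μ.real {ω | X ω = 0} / mgf X μ s := by
  have hnull : NullMeasurableSet {ω | X ω = 0} μ :=
    hXm.nullMeasurableSet_preimage (measurableSet_singleton 0)
  have hdensity : ∀ᵐ ω ∂μ.restrict {ω | X ω = 0},
      rexp (s * X ω) / mgf X μ s = 1 / mgf X μ s := by
    filter_upwards [ae_restrict_mem₀ hnull] with ω hω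
    rw [show X ω = 0 from hω, mul_zero, exp_zero]
  rw [measureReal_def, tilted_mul_apply_eq_ofReal_integral_mgf, integral_congr_ae hdensity,
    setIntegral_const, smul_eq_mul, mul_one_div,
    ENNReal.toReal_ofReal (div_nonneg measureReal_nonneg mgf_nonneg)]

variable [IsFiniteMeasure μ]

theorem mgf_pos_of_ae_nonpos [NeZero μ] (hXm : AEMeasurable X μ) (hX : ∀ᵐ ω ∂μ, X ω ≤ 0)
    {s : ℝ} (hs : 0 ≤ s) : 0 < mgf X μ s :=
  mgf_pos' (NeZero.ne μ) (integrable_exp_mul_of_le s 0 hs hXm hX)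

theorem continuousOn_mgf_of_ae_nonpos (hXm : AEMeasurable X μ) (hX : ∀ᵐ ω ∂μ, X ω ≤ 0) :
    ContinuousOn (mgf X μ) (Ici 0) :=
  continuousOn_of_dominated (fun s _ => aestronglyMeasurable_exp_mul hXm s)
    (fun _ hs => norm_exp_mul_le_one_of_ae_nonpos hX hs) (integrable_const 1)
    (Eventually.of_forall fun _ => by fun_prop)

theorem strictAntiOn_mgf_of_ae_nonpos (hXm : AEMeasurable X μ) (hX : ∀ᵐ ω ∂μ, X ω ≤ 0)
    (hX0 : ¬ ∀ᵐ ω ∂μ, X ω = 0) : StrictAntiOn (mgf X μ) (Ici 0) := by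
  intro s hs t ht hst
  have hint {r : ℝ} (hr : 0 ≤ r) : Integrable (fun ω => rexp (r * X ω)) μ :=
    integrable_exp_mul_of_le r 0 hr hXm hX
  have hle : (fun ω => rexp (t * X ω)) ≤ᵐ[μ] fun ω => rexp (s * X ω) := by
    filter_upwards [hX] with ω hω
    exact exp_le_exp.2 (mul_le_mul_of_nonpos_right hst.le hω)
  refine (integral_mono_ae (hint ht) (hint hs) hle).lt_of_ne fun heq => hX0 ?_
  filter_upwards [(integral_eq_iff_of_ae_le (hint ht) (hint hs) hle).1 heq] with ω hω
  exact (mul_eq_mul_right_iff.1 (exp_injective hω)).resolve_left hst.ne'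

theorem tendsto_mgf_atTop_of_ae_nonpos (hXm : AEMeasurable X μ) (hX : ∀ᵐ ω ∂μ, X ω ≤ 0) :
    Tendsto (mgf X μ) atTop (𝓝 (μ.real {ω | X ω = 0})) := by
  have hlim : ∫ ω, {ω | X ω = 0}.indicator 1 ω ∂μ = μ.real {ω | X ω = 0} := by
    have hnull : NullMeasurableSet {ω | X ω = 0} μ :=
      hXm.nullMeasurableSet_preimage (measurableSet_singleton 0)
    simp [integral_indicator₀ hnull]
  rw [← hlim]
  refine tendsto_integral_filter_of_dominated_convergence 1
    (Eventually.of_forall (aestronglyMeasurable_exp_mul hXm))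
    ((eventually_ge_atTop 0).mono fun _ => norm_exp_mul_le_one_of_ae_nonpos hX)
    (integrable_const 1) ?_
  filter_upwards [hX] with ω hω
  exact tendsto_exp_mul_atTop_indicator hω

theorem continuousOn_measureReal_tilted_mul [NeZero μ] (hXm : AEMeasurable X μ)
    (hX : ∀ᵐ ω ∂μ, X ω ≤ 0) :
    ContinuousOn (fun s : ℝ => (μ.tilted (s * X ·)).real {ω | X ω = 0}) (Ici 0) := by
  simp only [measureReal_tilted_mul_eq_div_mgf hXm]
  exact continuousOn_const.div (continuousOn_mgf_of_ae_nonpos hXm hX)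
    fun s hs => (mgf_pos_of_ae_nonpos hXm hX hs).ne'

theorem strictMonoOn_measureReal_tilted_mul (hXm : AEMeasurable X μ) (hX : ∀ᵐ ω ∂μ, X ω ≤ 0)
    (hX0 : ¬ ∀ᵐ ω ∂μ, X ω = 0) (hpos : 0 < μ.real {ω | X ω = 0}) :
    StrictMonoOn (fun s : ℝ => (μ.tilted (s * X ·)).real {ω | X ω = 0}) (Ici 0) := by
  have : NeZero μ := ⟨fun h => by simp [h] at hpos⟩
  intro s hs t ht hst
  simp only [measureReal_tilted_mul_eq_div_mgf hXm]
  exact div_lt_div_of_pos_left hpos (mgf_pos_of_ae_nonpos hXm hX ht)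
    (strictAntiOn_mgf_of_ae_nonpos hXm hX hX0 hs ht hst)

theorem tendsto_measureReal_tilted_mul_atTop (hXm : AEMeasurable X μ) (hX : ∀ᵐ ω ∂μ, X ω ≤ 0)
    (hpos : 0 < μ.real {ω | X ω = 0}) :
    Tendsto (fun s : ℝ => (μ.tilted (s * X ·)).real {ω | X ω = 0}) atTop (𝓝 1) := by
  simp only [measureReal_tilted_mul_eq_div_mgf hXm]
  rw [← div_self hpos.ne']
  exact tendsto_const_nhds.div (tendsto_mgf_atTop_of_ae_nonpos hXm hX) hpos.ne'

end NonposStatistic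

section ExponentialFamily

variable {p : ℕ} {ν : Measure (EuclideanSpace ℝ (Fin p))} {y δ θ : EuclideanSpace ℝ (Fin p)}

theorem partitionFn_lt_top_iff_integrable :
    partitionFn ν θ < ⊤ ↔ Integrable (fun x => rexp ⟪x, θ⟫) ν := by
  have hmeas : AEStronglyMeasurable (fun x => rexp ⟪x, θ⟫) ν :=
    (by fun_prop : Continuous fun x => rexp ⟪x, θ⟫).aestronglyMeasurable
  rw [Integrable, and_iff_right hmeas,
    hasFiniteIntegral_iff_ofReal (Eventually.of_forall fun x => (exp_pos _).le), partitionFn]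

theorem toReal_partitionFn : (partitionFn ν θ).toReal = ∫ x, rexp ⟪x, θ⟫ ∂ν :=
  (integral_eq_lintegral_of_nonneg_ae (Eventually.of_forall fun _ => (exp_pos _).le)
    (by fun_prop : Continuous fun x => rexp ⟪x, θ⟫).aestronglyMeasurable).symm

theorem expFam_eq_tilted (hθ : partitionFn ν θ < ⊤) : expFam ν θ = ν.tilted (⟪·, θ⟫) := by
  rcases eq_zero_or_neZero ν with rfl | _
  · simp [expFam]
  · have hpos := integral_exp_pos (partitionFn_lt_top_iff_integrable.1 hθ)
    simp only [expFam, cumulant, toReal_partitionFn, exp_sub, exp_log hpos, Measure.tilted]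

theorem partitionFn_add_smul_lt_top (hrec : ∀ᵐ x ∂ν, ⟪x - y, δ⟫ ≤ 0)
    (hθ : partitionFn ν θ < ⊤) {s : ℝ} (hs : 0 ≤ s) : partitionFn ν (θ + s • δ) < ⊤ := by
  rw [partitionFn_lt_top_iff_integrable] at hθ ⊢
  refine (hθ.mul_const (rexp (s * ⟪y, δ⟫))).mono'
    (by fun_prop : Continuous _).aestronglyMeasurable ?_
  filter_upwards [hrec] with x hx
  rw [inner_sub_left, sub_nonpos] at hx
  rw [norm_of_nonneg (exp_pos _).le, ← exp_add, inner_add_right, inner_smul_right]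
  gcongr

theorem expFam_add_smul_eq_tilted (hrec : ∀ᵐ x ∂ν, ⟪x - y, δ⟫ ≤ 0) (hθ : partitionFn ν θ < ⊤)
    {s : ℝ} (hs : 0 ≤ s) :
    expFam ν (θ + s • δ) = ν.tilted fun x => ⟪x, θ⟫ + s * ⟪x - y, δ⟫ := by
  have hinner (x : EuclideanSpace ℝ (Fin p)) :
      ⟪x, θ + s • δ⟫ = ⟪x, θ⟫ + s * ⟪x - y, δ⟫ + s * ⟪y, δ⟫ := by
    rw [inner_add_right, inner_smul_right, inner_sub_left]
    ring
  rw [expFam_eq_tilted (partitionFn_add_smul_lt_top hrec hθ hs)]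
  simp only [hinner, tilted_add_const]

end ExponentialFamily

theorem expFam_measure_hyperplane_mono_tendsto_one_general {Ω : Type*} {mΩ : MeasurableSpace Ω}
    {ν : Measure Ω} {f X : Ω → ℝ} (hf : Integrable (fun ω => rexp (f ω)) ν)
    (hXm : AEMeasurable X ν) (hX : ∀ᵐ ω ∂ν, X ω ≤ 0) (hX0 : ¬ ∀ᵐ ω ∂ν, X ω = 0)
    (hpos : 0 < ν {ω | X ω = 0}) :
    ContinuousOn (fun s : ℝ => (ν.tilted fun ω => f ω + s * X ω).real {ω | X ω = 0}) (Ici 0) ∧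
      StrictMonoOn (fun s : ℝ => (ν.tilted fun ω => f ω + s * X ω).real {ω | X ω = 0}) (Ici 0) ∧
      Tendsto (fun s : ℝ => (ν.tilted fun ω => f ω + s * X ω).real {ω | X ω = 0})
        atTop (𝓝 1) := by
  have htilt (s : ℝ) : (ν.tilted fun ω => f ω + s * X ω) = (ν.tilted f).tilted (s * X ·) :=
    (tilted_tilted hf _).symm
  have hμν : ν.tilted f ≪ ν := tilted_absolutelyContinuous ν f
  have hνμ : ν ≪ ν.tilted f := absolutelyContinuous_tilted hf
  have hXm' := hXm.mono_ac hμν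
  have hX' := hμν.ae_le hX
  have hpos' : 0 < (ν.tilted f).real {ω | X ω = 0} :=
    ENNReal.toReal_pos (fun h => hpos.ne' (hνμ h)) (measure_ne_top _ _)
  have : NeZero (ν.tilted f) := ⟨fun h => by simp [h] at hpos'⟩
  simp only [htilt]
  exact ⟨continuousOn_measureReal_tilted_mul hXm' hX',
    strictMonoOn_measureReal_tilted_mul hXm' hX' (fun h => hX0 (hνμ.ae_le h)) hpos',
    tendsto_measureReal_tilted_mul_atTop hXm' hX' hpos'⟩

/-- If `δ` is a direction of recession that is not a direction of constancy, and
`H = {x | ⟪x − y, δ⟫ = 0}` has positive `ν`-measure, then for every `θ` in the natural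
parameter space, `s ↦ μ_{θ+sδ}(H)` is continuous and strictly increasing on `[0, ∞)` and
tends to `1` as `s → ∞`. -/
theorem expFam_measure_hyperplane_mono_tendsto_one {p : ℕ} (hp : 0 < p)
    (ν : Measure (EuclideanSpace ℝ (Fin p))) [SigmaFinite ν] (hν : ν ≠ 0)
    (hΘ : {θ : EuclideanSpace ℝ (Fin p) | partitionFn ν θ < ⊤}.Nonempty)
    (y δ : EuclideanSpace ℝ (Fin p))
    (hrec : ∀ᵐ x ∂ν, ⟪x - y, δ⟫ ≤ 0)
    (hncon : ¬ ∀ᵐ x ∂ν, ⟪x - y, δ⟫ = 0)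
    (H : Set (EuclideanSpace ℝ (Fin p)))
    (hH : H = {x : EuclideanSpace ℝ (Fin p) | ⟪x - y, δ⟫ = 0})
    (hHpos : 0 < ν H) :
    ∀ θ : EuclideanSpace ℝ (Fin p), partitionFn ν θ < ⊤ →
      ContinuousOn (fun s : ℝ => (expFam ν (θ + s • δ) H).toReal) (Set.Ici 0) ∧
        StrictMonoOn (fun s : ℝ => (expFam ν (θ + s • δ) H).toReal) (Set.Ici 0) ∧
        Tendsto (fun s : ℝ => (expFam ν (θ + s • δ) H).toReal) atTop (𝓝 1) := by
  subst hH
  intro θ hθ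
  have heq : EqOn (fun s : ℝ => (ν.tilted fun x => ⟪x, θ⟫ + s * ⟪x - y, δ⟫).real
      {x | ⟪x - y, δ⟫ = 0})
      (fun s => (expFam ν (θ + s • δ) {x | ⟪x - y, δ⟫ = 0}).toReal) (Ici 0) := fun s hs => by
    simp only [expFam_add_smul_eq_tilted hrec hθ hs, measureReal_def]
  obtain ⟨hcont, hmono, hlim⟩ := expFam_measure_hyperplane_mono_tendsto_one_general
    (partitionFn_lt_top_iff_integrable.1 hθ)
    (by fun_prop : Measurable fun x => ⟪x - y, δ⟫).aemeasurable hrec hncon hHpos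
  exact ⟨hcont.congr heq.symm, hmono.congr heq,
    hlim.congr' ((eventually_ge_atTop 0).mono heq)⟩
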